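/- Let W = Δ_A × Δ_B ⊂ ℝ^K (K = A + B) and let F(μ,ν) = (Aν, 1 − Aᵀμ) with matrix entries in [0,1]. For every w ∈ W with positive coordinates and all w¹, w² ∈ W, ‖F(w¹) − F(w²)‖_{⋆,w} ≤ √K · ‖w¹ − w²‖_w, where ‖x‖_w² = Σᵢ xᵢ²/wᵢ² and ‖x‖_{⋆,w}² = Σᵢ wᵢ² xᵢ². -/

import Mathlib

open Finset

theorem aux_cs {k : ℕ} (p a d : Fin k → ℝ) (hp : p ∈ stdSimplex ℝ (Fin k))
    (hpos : ∀ i, 0 < p i) (ha : ∀ i, a i ∈ Set.Icc (0 : ℝ) 1) :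
    (∑ i, a i * d i) ^ 2 ≤ ∑ i, d i ^ 2 / p i ^ 2 := by
  have h1 := Finset.sum_mul_sq_le_sq_mul_sq Finset.univ (fun i => a i * p i) (fun i => d i / p i)
  have e1 : ∑ i, a i * p i * (d i / p i) = ∑ i, a i * d i := by
    refine Finset.sum_congr rfl fun i _ => ?_
    have := (hpos i).ne'
    field_simp
  have e2 : ∑ i, (d i / p i) ^ 2 = ∑ i, d i ^ 2 / p i ^ 2 :=
    Finset.sum_congr rfl fun i _ => div_pow _ _ _
  have e3 : ∑ i, (a i * p i) ^ 2 ≤ 1 := by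
    rw [← hp.2]
    refine Finset.sum_le_sum fun i _ => ?_
    have hle : p i ≤ 1 := by
      rw [← hp.2]
      exact Finset.single_le_sum (fun j _ => hp.1 j) (Finset.mem_univ i)
    have h0 := hpos i
    have h2 : a i * p i ≤ p i := mul_le_of_le_one_left h0.le (ha i).2
    have h3 : 0 ≤ a i * p i := mul_nonneg (ha i).1 h0.le
    nlinarith
  simp only [e1, e2] at h1
  refine h1.trans (mul_le_of_le_one_left ?_ e3)
  exact Finset.sum_nonneg fun i _ => by positivity

theorem aux_avg {k : ℕ} (p c : Fin k → ℝ) (S : ℝ) (hp : p ∈ stdSimplex ℝ (Fin k))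
    (hc : ∀ i, c i ^ 2 ≤ S) : ∑ i, p i ^ 2 * c i ^ 2 ≤ S := by
  have : S = ∑ i, p i * S := by rw [← Finset.sum_mul, hp.2, one_mul]
  rw [this]
  refine Finset.sum_le_sum fun i _ => ?_
  have hle : p i ≤ 1 := by
    rw [← hp.2]
    exact Finset.single_le_sum (fun j _ => hp.1 j) (Finset.mem_univ i)
  have h0 := hp.1 i
  exact mul_le_mul (by nlinarith) (hc i) (sq_nonneg _) h0

/-- The pseudo-gradient `F(μ,ν) = (Aν, 1 − Aᵀμ)` is `√K`-Lipschitz with respect to the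
local norms `‖·‖_w` and `‖·‖_{⋆,w}` induced by the log-barrier, for every positive
`w ∈ W = Δ_A × Δ_B`. -/
theorem stmt_10 (m n : ℕ)
    (A : Matrix (Fin m) (Fin n) ℝ) (hA : ∀ i j, A i j ∈ Set.Icc (0 : ℝ) 1)
    (F₁ : (Fin m → ℝ) × (Fin n → ℝ) → Fin m → ℝ)
    (F₂ : (Fin m → ℝ) × (Fin n → ℝ) → Fin n → ℝ)
    (hF₁ : ∀ w i, F₁ w i = ∑ j, A i j * w.2 j)
    (hF₂ : ∀ w j, F₂ w j = 1 - ∑ i, A i j * w.1 i)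
    (w : (Fin m → ℝ) × (Fin n → ℝ))
    (hwW : w.1 ∈ stdSimplex ℝ (Fin m) ∧ w.2 ∈ stdSimplex ℝ (Fin n))
    (hwpos : (∀ i, 0 < w.1 i) ∧ (∀ j, 0 < w.2 j))
    (w₁ w₂ : (Fin m → ℝ) × (Fin n → ℝ))
    (hw₁ : w₁.1 ∈ stdSimplex ℝ (Fin m) ∧ w₁.2 ∈ stdSimplex ℝ (Fin n))
    (hw₂ : w₂.1 ∈ stdSimplex ℝ (Fin m) ∧ w₂.2 ∈ stdSimplex ℝ (Fin n)) :
    Real.sqrt ((∑ i, (w.1 i) ^ 2 * (F₁ w₁ i - F₁ w₂ i) ^ 2) +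
        ∑ j, (w.2 j) ^ 2 * (F₂ w₁ j - F₂ w₂ j) ^ 2)
      ≤ Real.sqrt (m + n) *
        Real.sqrt ((∑ i, (w₁.1 i - w₂.1 i) ^ 2 / (w.1 i) ^ 2) +
          ∑ j, (w₁.2 j - w₂.2 j) ^ 2 / (w.2 j) ^ 2) := by
  rw [← Real.sqrt_mul (by positivity)]
  apply Real.sqrt_le_sqrt
  have H1 := aux_avg w.1 (fun i => F₁ w₁ i - F₁ w₂ i) _ hwW.1 (fun i => by
    have := aux_cs w.2 (A i) (fun j => w₁.2 j - w₂.2 j) hwW.2 hwpos.2 (hA i)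
    simpa only [hF₁, mul_sub, Finset.sum_sub_distrib] using this)
  have H2 := aux_avg w.2 (fun j => F₂ w₁ j - F₂ w₂ j) _ hwW.2 (fun j => by
    have := aux_cs w.1 (fun i => A i j) (fun i => w₁.1 i - w₂.1 i) hwW.1 hwpos.1
      (fun i => hA i j)
    have e : F₂ w₁ j - F₂ w₂ j = -(∑ i, A i j * (w₁.1 i - w₂.1 i)) := by
      simp only [hF₂, mul_sub, Finset.sum_sub_distrib]
      ring
    simp only [e, neg_sq]
    exact this)
  have hm : (1 : ℝ) ≤ m + n := by
    have : m ≠ 0 := by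
      rintro rfl
      have := hwW.1.2
      simp at this
    have : 1 ≤ m + n := by omega
    exact_mod_cast this
  refine le_trans ?_ (le_mul_of_one_le_left (by positivity) hm)
  linarith
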